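/- Let d, p ∈ ℕ, q ≥ 1, Ξ := {u ∈ [0,∞)^d : ‖u‖_q = 1}, and let S be a finite Borel measure on Ξ. For b ∈ Ξ^p (a d×p matrix whose columns lie in Ξ) and u ∈ [0,∞)^d, let f_b(u) := inf_{c ∈ [0,∞)^p} Σ_{i=1}^d |u_i − max_{1≤k≤p} c_k·b_{ik}|. Then the map b ↦ ∫_Ξ f_b(u) S(du) is continuous on the compact set Ξ^p, satisfies 0 ≤ ∫_Ξ f_b(u) S(du) ≤ ∫_Ξ ‖u‖₁ S(du) < ∞ for every b, and attains its minimum on Ξ^p; i.e., the exhaustive, unrestricted PCA_p problem for a 1-Fréchet max-stable distribution with spectral measure S has a solution. -/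

import Mathlib

open MeasureTheory
open scoped NNReal

/-!
Writing `e(c)` for the `ℓ¹`-error of the coefficients `c`, we have `e(0) = ‖u‖₁` and
`e(c) ≥ c_k ∑ᵢ b_{ik} - ‖u‖₁`, so only coefficients with `c_k ∑ᵢ b_{ik} ≤ 2 ‖u‖₁` compete in the
infimum. Locally uniformly in `b` (with positive column sums) and `u`, the infimum thus runs over
one fixed compact box, which makes `f_b(u)` jointly continuous. As `0 ≤ f_b(u) ≤ ‖u‖₁`, dominated
convergence carries continuity over to the integral, and compactness provides a minimizer.
-/

open Filter Set Topology

section MaxTimes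

variable {ι κ : Type*}

/-- The max-times combination of the columns `b k` with coefficients `c k`. The column index comes
first, so `b k i` is the matrix entry `b_{ik}`. -/
noncomputable def maxTimesComb (b : κ → ι → ℝ) (c : κ → ℝ≥0) (i : ι) : ℝ :=
  ⨆ k, (c k : ℝ) * b k i

lemma mul_le_maxTimesComb [Finite κ] (b : κ → ι → ℝ) (c : κ → ℝ≥0) (k : κ) (i : ι) :
    c k * b k i ≤ maxTimesComb b c i :=
  le_ciSup (f := fun l => (c l : ℝ) * b l i) (finite_range _).bddAbove k

lemma continuous_maxTimesComb [Finite κ] [Nonempty κ] (i : ι) :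
    Continuous fun x : (κ → ι → ℝ) × (κ → ℝ≥0) => maxTimesComb x.1 x.2 i := by
  have := Fintype.ofFinite κ
  simp only [maxTimesComb, ← Finset.sup'_univ_eq_ciSup]
  exact Continuous.finset_sup'_apply Finset.univ_nonempty fun k _ => by fun_prop

variable [Fintype ι]

/-- The `ℓ¹`-distance from `u` to the max-times combination of the columns of `b` with
coefficients `c`. -/
noncomputable def maxTimesError (b : κ → ι → ℝ) (u : ι → ℝ) (c : κ → ℝ≥0) : ℝ :=
  ∑ i, |u i - maxTimesComb b c i|

/-- The `ℓ¹`-distance from `u` to the max-times span of the columns of `b`, written `f_b(u)` in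
the theory of max-stable principal component analysis. -/
noncomputable def maxTimesDist (b : κ → ι → ℝ) (u : ι → ℝ) : ℝ :=
  ⨅ c : κ → ℝ≥0, maxTimesError b u c

variable {b : κ → ι → ℝ} {u : ι → ℝ}

lemma maxTimesError_nonneg (c : κ → ℝ≥0) : 0 ≤ maxTimesError b u c :=
  Finset.sum_nonneg fun _ _ => abs_nonneg _

lemma maxTimesError_zero : maxTimesError b u 0 = ∑ i, |u i| := by
  simp [maxTimesError, maxTimesComb]

lemma bddBelow_range_maxTimesError : BddBelow (range (maxTimesError b u)) :=
  ⟨0, forall_mem_range.2 maxTimesError_nonneg⟩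

lemma maxTimesDist_nonneg : 0 ≤ maxTimesDist b u :=
  Real.iInf_nonneg maxTimesError_nonneg

lemma maxTimesDist_le_sum_abs : maxTimesDist b u ≤ ∑ i, |u i| :=
  (ciInf_le bddBelow_range_maxTimesError 0).trans_eq maxTimesError_zero

lemma mul_sum_sub_sum_abs_le_maxTimesError [Finite κ] (c : κ → ℝ≥0) (k : κ) :
    c k * ∑ i, b k i - ∑ i, |u i| ≤ maxTimesError b u c := by
  rw [Finset.mul_sum, ← Finset.sum_sub_distrib]
  refine Finset.sum_le_sum fun i _ => ?_
  calc c k * b k i - |u i| ≤ maxTimesComb b c i - u i :=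
        sub_le_sub (mul_le_maxTimesComb b c k i) (le_abs_self _)
    _ ≤ |u i - maxTimesComb b c i| := by rw [abs_sub_comm]; exact le_abs_self _

lemma maxTimesDist_eq_sInf_image_Icc [Finite κ] {M : ℝ≥0} (hb : ∀ k, 0 ≤ ∑ i, b k i)
    (hM : ∀ k, 2 * ∑ i, |u i| ≤ M * ∑ i, b k i) :
    maxTimesDist b u = sInf (maxTimesError b u '' Icc 0 fun _ => M) := by
  have zero_mem : (0 : κ → ℝ≥0) ∈ Icc 0 fun _ => M := ⟨le_rfl, fun _ => zero_le⟩
  have bdd : BddBelow (maxTimesError b u '' Icc 0 fun _ => M) :=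
    bddBelow_range_maxTimesError.mono (image_subset_range _ _)
  apply le_antisymm
  · exact csInf_le_csInf bddBelow_range_maxTimesError ⟨_, mem_image_of_mem _ zero_mem⟩
      (image_subset_range _ _)
  refine le_ciInf fun c => ?_
  by_cases hc : ∀ k, c k ≤ M
  · exact csInf_le bdd (mem_image_of_mem _ ⟨fun _ => zero_le, hc⟩)
  obtain ⟨k, hk⟩ := not_forall.1 hc
  have hMc : (M : ℝ) ≤ c k := (not_le.1 hk).le
  calc sInf (maxTimesError b u '' Icc 0 fun _ => M) ≤ maxTimesError b u 0 :=
        csInf_le bdd (mem_image_of_mem _ zero_mem)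
    _ = 2 * ∑ i, |u i| - ∑ i, |u i| := by rw [maxTimesError_zero]; ring
    _ ≤ c k * ∑ i, b k i - ∑ i, |u i| :=
        sub_le_sub_right ((hM k).trans (mul_le_mul_of_nonneg_right hMc (hb k))) _
    _ ≤ maxTimesError b u c := mul_sum_sub_sum_abs_le_maxTimesError c k

lemma integral_maxTimesDist_le {μ : Measure (ι → ℝ)}
    (hμ : Integrable (fun u => ∑ i, |u i|) μ) (b : κ → ι → ℝ) :
    ∫ u, maxTimesDist b u ∂μ ≤ ∫ u, ∑ i, |u i| ∂μ :=
  integral_mono_of_nonneg (.of_forall fun _ => maxTimesDist_nonneg) hμ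
    (.of_forall fun _ => maxTimesDist_le_sum_abs)

variable [Finite κ] [Nonempty κ]

lemma continuous_maxTimesError :
    Continuous fun x : ((κ → ι → ℝ) × (ι → ℝ)) × (κ → ℝ≥0) => maxTimesError x.1.1 x.1.2 x.2 :=
  continuous_finsetSum _ fun i _ =>
    (((continuous_apply i).comp continuous_fst.snd).sub
      ((continuous_maxTimesComb i).comp (continuous_fst.fst.prodMk continuous_snd))).abs

lemma continuousOn_maxTimesDist :
    ContinuousOn (fun x : (κ → ι → ℝ) × (ι → ℝ) => maxTimesDist x.1 x.2)
      {x | ∀ k, 0 < ∑ i, x.1 k i} := by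
  rintro ⟨b, u⟩ (hb : ∀ k, 0 < ∑ i, b k i)
  obtain ⟨M, hM⟩ : ∃ M : ℝ≥0, ∀ k, 2 * ∑ i, |u i| < M * ∑ i, b k i :=
    (eventually_all.2 fun k => ((NNReal.tendsto_coe_atTop.2 tendsto_id).atTop_mul_const
      (hb k)).eventually_gt_atTop _).exists
  have box_continuous : Continuous fun x : (κ → ι → ℝ) × (ι → ℝ) =>
      sInf (maxTimesError x.1 x.2 '' Icc 0 fun _ => M) :=
    isCompact_Icc.continuous_sInf
      (f := fun (x : (κ → ι → ℝ) × (ι → ℝ)) c => maxTimesError x.1 x.2 c) continuous_maxTimesError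
  have box_suffices : ∀ᶠ x : (κ → ι → ℝ) × (ι → ℝ) in 𝓝 (b, u),
      ∀ k, 2 * ∑ i, |x.2 i| < M * ∑ i, x.1 k i :=
    eventually_all.2 fun k => ContinuousAt.eventually_lt (by fun_prop) (by fun_prop) (hM k)
  refine box_continuous.continuousWithinAt.congr_of_eventuallyEq ?_
    (maxTimesDist_eq_sInf_image_Icc (fun k => (hb k).le) fun k => (hM k).le)
  filter_upwards [self_mem_nhdsWithin, nhdsWithin_le_nhds box_suffices] with x hx hxM
  exact maxTimesDist_eq_sInf_image_Icc (fun k => (hx k).le) fun k => (hxM k).le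

lemma continuousOn_integral_maxTimesDist {μ : Measure (ι → ℝ)}
    (hμ : Integrable (fun u => ∑ i, |u i|) μ) :
    ContinuousOn (fun b : κ → ι → ℝ => ∫ u, maxTimesDist b u ∂μ) {b | ∀ k, 0 < ∑ i, b k i} := by
  refine continuousOn_of_dominated (fun b hb => ?_) (fun b _ => .of_forall fun u => ?_) hμ
    (.of_forall fun u => ?_)
  · have dist_continuous : Continuous (maxTimesDist b) :=
      continuousOn_maxTimesDist.comp_continuous (f := fun u => (b, u)) (by fun_prop) fun _ => hb
    exact dist_continuous.aestronglyMeasurable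
  · rw [Real.norm_of_nonneg maxTimesDist_nonneg]
    exact maxTimesDist_le_sum_abs
  · exact continuousOn_maxTimesDist.comp (f := fun b : κ → ι → ℝ => (b, u)) (by fun_prop)
      fun _ hb => hb

theorem stmt_16_general {Ξ : Set (ι → ℝ)} (hΞ : IsCompact Ξ) (hne : Ξ.Nonempty)
    (hpos : ∀ u ∈ Ξ, 0 < u) (S : Measure (ι → ℝ)) [IsFiniteMeasureOnCompacts S] :
    ContinuousOn (fun b : κ → ι → ℝ => ∫ u in Ξ, maxTimesDist b u ∂S) {b | ∀ k, b k ∈ Ξ} ∧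
    (∀ b : κ → ι → ℝ, (∀ k, b k ∈ Ξ) → 0 ≤ ∫ u in Ξ, maxTimesDist b u ∂S ∧
      ∫ u in Ξ, maxTimesDist b u ∂S ≤ ∫ u in Ξ, ∑ i, u i ∂S) ∧
    ∃ bstar : κ → ι → ℝ, (∀ k, bstar k ∈ Ξ) ∧ ∀ b : κ → ι → ℝ, (∀ k, b k ∈ Ξ) →
      ∫ u in Ξ, maxTimesDist bstar u ∂S ≤ ∫ u in Ξ, maxTimesDist b u ∂S := by
  have integrable_l1 : IntegrableOn (fun u => ∑ i, |u i|) Ξ S :=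
    ContinuousOn.integrableOn_compact hΞ (by fun_prop)
  have l1_eq : ∫ u in Ξ, ∑ i, |u i| ∂S = ∫ u in Ξ, ∑ i, u i ∂S :=
    setIntegral_congr_fun hΞ.measurableSet fun u hu =>
      Finset.sum_congr rfl fun i _ => abs_of_nonneg ((hpos u hu).le i)
  have objective_continuousOn :
      ContinuousOn (fun b : κ → ι → ℝ => ∫ u in Ξ, maxTimesDist b u ∂S) {b | ∀ k, b k ∈ Ξ} :=
    (continuousOn_integral_maxTimesDist integrable_l1).mono fun b hb k =>
      Fintype.sum_pos (hpos (b k) (hb k))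
  refine ⟨objective_continuousOn, fun b _ => ⟨integral_nonneg fun _ => maxTimesDist_nonneg,
    (integral_maxTimesDist_le integrable_l1 b).trans_eq l1_eq⟩, ?_⟩
  obtain ⟨u, hu⟩ := hne
  exact (isCompact_pi_infinite fun _ => hΞ).exists_isMinOn ⟨fun _ => u, fun _ => hu⟩
    objective_continuousOn

end MaxTimes

section NonnegSphere

/-- The part of the unit `ℓ^q` sphere in the nonnegative orthant. -/
def nonnegSphere (ι : Type*) [Fintype ι] (q : ℝ) : Set (ι → ℝ) :=
  {u | (∀ i, 0 ≤ u i) ∧ (∑ i, u i ^ q) ^ (1 / q) = 1}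

variable {ι : Type*} [Fintype ι] {q : ℝ} {u : ι → ℝ}

lemma pos_of_mem_nonnegSphere (hq : 0 < q) (hu : u ∈ nonnegSphere ι q) : 0 < u := by
  refine lt_of_le_of_ne hu.1 ?_
  rintro rfl
  simpa [Real.zero_rpow hq.ne', Real.zero_rpow (inv_pos.2 hq).ne'] using hu.2

lemma le_one_of_mem_nonnegSphere (hq : 0 < q) (hu : u ∈ nonnegSphere ι q) : u ≤ 1 := fun i =>
  have rpow_nonneg (j : ι) : 0 ≤ u j ^ q := Real.rpow_nonneg (hu.1 j) q
  calc u i = (u i ^ q) ^ (1 / q) := by rw [one_div, Real.rpow_rpow_inv (hu.1 i) hq.ne']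
    _ ≤ (∑ j, u j ^ q) ^ (1 / q) := Real.rpow_le_rpow (rpow_nonneg i)
        (Finset.single_le_sum (fun j _ => rpow_nonneg j) (Finset.mem_univ i)) (by positivity)
    _ = 1 := hu.2

lemma isClosed_nonnegSphere (hq : 0 ≤ q) : IsClosed (nonnegSphere ι q) := by
  have norm_continuous : Continuous fun u : ι → ℝ => (∑ i, u i ^ q) ^ (1 / q) :=
    (continuous_finsetSum _ fun i _ => (continuous_apply i).rpow_const fun _ => .inr hq).rpow_const
      fun _ => .inr (by positivity)
  exact isClosed_Ici.inter (isClosed_eq norm_continuous continuous_const)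

lemma isCompact_nonnegSphere (hq : 0 < q) : IsCompact (nonnegSphere ι q) :=
  isCompact_Icc.of_isClosed_subset (isClosed_nonnegSphere hq.le) fun _ hu =>
    ⟨hu.1, le_one_of_mem_nonnegSphere hq hu⟩

lemma nonnegSphere_nonempty [Nonempty ι] (hq : q ≠ 0) : (nonnegSphere ι q).Nonempty := by
  classical
  obtain ⟨i⟩ := ‹Nonempty ι›
  have sum_single : ∑ j, (Pi.single i 1 : ι → ℝ) j ^ q = 1 := by
    simp [Pi.single_apply, Real.zero_rpow hq, apply_ite (· ^ q)]
  have single_nonneg : (0 : ι → ℝ) ≤ Pi.single i 1 := Pi.single_nonneg.2 zero_le_one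
  exact ⟨Pi.single i 1, single_nonneg, by rw [sum_single, Real.one_rpow]⟩

end NonnegSphere

/-- Existence of a solution to the exhaustive, unrestricted `PCA_p` problem for a
1-Fréchet max-stable distribution with finite spectral measure `S` on the sphere
`Ξ = {u ∈ [0,∞)^d : ‖u‖_q = 1}`: the objective `b ↦ ∫_Ξ f_b(u) S(du)` is continuous
on the (compact) set of matrices with columns in `Ξ`, bounded between `0` and
`∫_Ξ ‖u‖₁ S(du)`, and attains its minimum there. -/
theorem stmt_16 (d p : ℕ) (hd : 0 < d) (hp : 0 < p) (q : ℝ) (hq : 1 ≤ q)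
    (Ξ : Set (Fin d → ℝ))
    (hΞ : Ξ = {u | (∀ i, 0 ≤ u i) ∧ (∑ i, u i ^ q) ^ (1 / q) = 1})
    (S : Measure (Fin d → ℝ)) [IsFiniteMeasure S]
    (f : (Fin p → Fin d → ℝ) → (Fin d → ℝ) → ℝ)
    (hf : ∀ b u, f b u = ⨅ c : Fin p → ℝ≥0, ∑ i, |u i - ⨆ k, (c k : ℝ) * b k i|)
    (B : Set (Fin p → Fin d → ℝ)) (hB : B = {b | ∀ k, b k ∈ Ξ}) :
    ContinuousOn (fun b => ∫ u in Ξ, f b u ∂S) B ∧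
    (∀ b ∈ B, 0 ≤ ∫ u in Ξ, f b u ∂S ∧ ∫ u in Ξ, f b u ∂S ≤ ∫ u in Ξ, ∑ i, u i ∂S) ∧
    ∃ bstar ∈ B, ∀ b ∈ B, ∫ u in Ξ, f bstar u ∂S ≤ ∫ u in Ξ, f b u ∂S := by
  obtain rfl : f = maxTimesDist := funext₂ hf
  obtain rfl : Ξ = nonnegSphere (Fin d) q := hΞ
  subst hB
  have : NeZero d := ⟨hd.ne'⟩
  have : NeZero p := ⟨hp.ne'⟩
  have q_pos : 0 < q := one_pos.trans_le hq
  exact stmt_16_general (isCompact_nonnegSphere q_pos) (nonnegSphere_nonempty q_pos.ne')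
    (fun _ => pos_of_mem_nonnegSphere q_pos) S
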